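/- arXiv:1005.1839 — 2 statements merged into one kernel-verified Lean document; each statement's English description precedes it below -/
import Mathlib

section
/- Let d, e, f be the permutations of {0,…,12} given in cycle notation by d = (0 12)(1 10)(3 5)(6 7), e = (0 10)(3 4)(9 2)(5 8), f = (0 4)(9 12)(1 6)(2 11), and d' = (0 4)(2 3)(6 8)(9 10), e' = (0 12)(6 9)(5 11)(1 4), f' = (0 10)(5 1)(2 7)(3 12). Let G be the subgroup of Sym(13) × Sym(13) generated by (d,d'), (e,e'), (f,f'), and let A = {(σ,τ) ∈ G : σ(0) = 0}, B = {(σ,τ) ∈ G : τ(0) = 0}. Then for every (σ,τ) ∈ G the number of fixed points of σ equals the number of fixed points of τ; A and B are Gassmann equivalent subgroups of G of index 13; and A and B are not conjugate in G. -/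
/-!
The labels are chosen so that `{0, 1, 3, 9}` is a perfect difference set modulo 13: calling the
point `x` and the line `y` incident when `x + y ∈ {0, 1, 3, 9}` gives the projective plane of
order 3, and each generator permutes points and lines compatibly with incidence. The incidence
matrix is invertible because its Gram matrix is positive definite, so it intertwines the two
permutation representations; comparing traces gives equal numbers of fixed points. Double counting
the pairs of a conjugate of `g` and a point fixed by it then shows that the two point stabilizers
meet every conjugacy class equally often. They are not conjugate, because the stabilizer of a line
fixes no point.
-/

open Equiv

/-- d = (0 12)(1 10)(3 5)(6 7) -/
def d : Perm (Fin 13) := swap 0 12 * swap 1 10 * swap 3 5 * swap 6 7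
/-- e = (0 10)(3 4)(9 2)(5 8) -/
def e : Perm (Fin 13) := swap 0 10 * swap 3 4 * swap 9 2 * swap 5 8
/-- f = (0 4)(9 12)(1 6)(2 11) -/
def f : Perm (Fin 13) := swap 0 4 * swap 9 12 * swap 1 6 * swap 2 11
/-- d' = (0 4)(2 3)(6 8)(9 10) -/
def d' : Perm (Fin 13) := swap 0 4 * swap 2 3 * swap 6 8 * swap 9 10
/-- e' = (0 12)(6 9)(5 11)(1 4) -/
def e' : Perm (Fin 13) := swap 0 12 * swap 6 9 * swap 5 11 * swap 1 4
/-- f' = (0 10)(5 1)(2 7)(3 12) -/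
def f' : Perm (Fin 13) := swap 0 10 * swap 5 1 * swap 2 7 * swap 3 12

/-- The subgroup of Sym(13) × Sym(13) generated by (d,d'), (e,e'), (f,f'). -/
def G₀ : Subgroup (Perm (Fin 13) × Perm (Fin 13)) :=
  Subgroup.closure {(d, d'), (e, e'), (f, f')}

/-- A = {(σ,τ) ∈ G₀ : σ 0 = 0}, the point stabilizer in the first action. -/
def A : Subgroup G₀ where
  carrier := {g | (g : Perm (Fin 13) × Perm (Fin 13)).1 0 = 0}
  one_mem' := rfl
  mul_mem' := by
    intro x y hx hy
    simp only [Set.mem_setOf_eq] at *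
    simp [Subgroup.coe_mul, Perm.mul_apply, hx, hy]
  inv_mem' := by
    intro x hx
    simp only [Set.mem_setOf_eq] at *
    conv_lhs => rw [← hx]
    simp

/-- B = {(σ,τ) ∈ G₀ : τ 0 = 0}, the point stabilizer in the second action. -/
def B : Subgroup G₀ where
  carrier := {g | (g : Perm (Fin 13) × Perm (Fin 13)).2 0 = 0}
  one_mem' := rfl
  mul_mem' := by
    intro x y hx hy
    simp only [Set.mem_setOf_eq] at *
    simp [Subgroup.coe_mul, Perm.mul_apply, hx, hy]
  inv_mem' := by
    intro x hx
    simp only [Set.mem_setOf_eq] at *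
    conv_lhs => rw [← hx]
    simp

open Function Matrix MulAction
open scoped Finset

section FixedPoints

variable {α β R : Type*}

/-- Brauer's permutation lemma. -/
theorem card_fixedPoints_eq_of_isUnit [Fintype α] [DecidableEq α] [CommRing R] [CharZero R]
    {M : Matrix α α R} (hM : IsUnit M) {σ τ : Perm α} (h : ∀ x y, M (σ x) (τ y) = M x y) :
    Nat.card (fixedPoints σ) = Nat.card (fixedPoints τ) := by
  obtain ⟨U, rfl⟩ := hM
  have intertwine : σ.permMatrix R * U.val = U.val * τ.permMatrix R := by
    rw [PEquiv.toMatrix_toPEquiv_mul, PEquiv.mul_toMatrix_toPEquiv]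
    ext x y
    simpa using h x (τ.symm y)
  have trace_eq : (σ.permMatrix R).trace = (τ.permMatrix R).trace := by
    rw [← trace_units_conj' U (σ.permMatrix R), mul_assoc, intertwine, Units.inv_mul_cancel_left]
  simpa only [trace_permutation, Nat.cast_inj, ← Nat.card_coe_set_eq] using trace_eq

/-- The 0/1 incidence matrix of a relation, with real entries so that positive definiteness can be
used to invert it. -/
def incidenceMatrix (r : α → β → Prop) [∀ x y, Decidable (r x y)] : Matrix α β ℝ :=
  of fun x y => if r x y then 1 else 0

theorem incidenceMatrix_mul_transpose_apply [Fintype β] (r : α → β → Prop)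
    [∀ x y, Decidable (r x y)] (x x' : α) :
    (incidenceMatrix r * (incidenceMatrix r)ᵀ) x x' = #{y | r x y ∧ r x' y} := by
  simp [incidenceMatrix, mul_apply, ← ite_and, and_comm]

/-- The linear algebra behind Fisher's inequality. -/
theorem isUnit_incidenceMatrix [Fintype α] [DecidableEq α] {r : α → α → Prop}
    [∀ x y, Decidable (r x y)] {l : ℕ} (h_ne : ∀ x x', x ≠ x' → #{y | r x y ∧ r x' y} = l)
    (h_lt : ∀ x, l < #{y | r x y}) : IsUnit (incidenceMatrix r) := by
  have gram : incidenceMatrix r * (incidenceMatrix r)ᵀ =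
      diagonal (fun x => (#{y | r x y} - l : ℝ)) + (l : ℝ) • vecMulVec 1 (star 1) := by
    ext x x'
    rw [incidenceMatrix_mul_transpose_apply]
    obtain rfl | hx := eq_or_ne x x'
    · simp
    · simp [hx, h_ne x x' hx]
  have posDef : (incidenceMatrix r * (incidenceMatrix r)ᵀ).PosDef := by
    rw [gram]
    refine (PosDef.diagonal fun x => ?_).add_posSemidef
      ((posSemidef_vecMulVec_self_star 1).smul l.cast_nonneg)
    exact sub_pos.2 (Nat.cast_lt.2 (h_lt x))
  rw [isUnit_iff_isUnit_det]
  exact isUnit_of_mul_isUnit_left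
    (det_mul (incidenceMatrix r) _ ▸ (isUnit_iff_isUnit_det _).1 posDef.isUnit)

end FixedPoints

section Gassmann

variable {G X Y : Type*} [Group G] [MulAction G X] [MulAction G Y]

/-- Gassmann equivalence of two subgroups: they have equally many elements in each conjugacy class.
Meant for finite `G`, since `Nat.card` of an infinite set is `0`. -/
def IsGassmannEquivalent (H K : Subgroup G) : Prop :=
  ∀ g : G, Nat.card ((H : Set G) ∩ conjugatesOf g : Set G) =
    Nat.card ((K : Set G) ∩ conjugatesOf g : Set G)

/-- Conjugation by `k`, as a bijection between the parts of the stabilizers of `x` and of `k • x` in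
a given conjugacy class. -/
def stabilizerInterConjugatesOfEquiv (g k : G) (x : X) :
    ((stabilizer G x : Set G) ∩ conjugatesOf g : Set G) ≃
      ((stabilizer G (k • x) : Set G) ∩ conjugatesOf g : Set G) :=
  (MulAut.conj k).toEquiv.subtypeEquiv fun h => by
    have isConj_conj : IsConj h (k * h * k⁻¹) := isConj_iff.2 ⟨k, rfl⟩
    have conjugatesOf_iff : k * h * k⁻¹ ∈ conjugatesOf g ↔ h ∈ conjugatesOf g :=
      ⟨fun hg => hg.trans isConj_conj.symm, fun hg => hg.trans isConj_conj⟩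
    simp [conjugatesOf_iff, mul_smul]

theorem card_mul_card_stabilizer_inter_conjugatesOf [IsPretransitive G X] (g : G) (x : X) :
    Nat.card X * Nat.card ((stabilizer G x : Set G) ∩ conjugatesOf g : Set G) =
      Nat.card (Σ h : conjugatesOf g, fixedBy X h.1) := by
  choose k hk using exists_smul_eq G x
  let swapPairs : (Σ z : X, ((stabilizer G z : Set G) ∩ conjugatesOf g : Set G)) ≃
      Σ h : conjugatesOf g, fixedBy X h.1 :=
    { toFun a := ⟨⟨a.2, a.2.2.2⟩, a.1, a.2.2.1⟩
      invFun a := ⟨a.2, a.1, a.2.2, a.1.2⟩ }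
  let moveToFiber (z : X) : ((stabilizer G x : Set G) ∩ conjugatesOf g : Set G) ≃
      ((stabilizer G z : Set G) ∩ conjugatesOf g : Set G) :=
    (stabilizerInterConjugatesOfEquiv g (k z) x).trans (Equiv.setCongr (by rw [hk]))
  rw [← Nat.card_prod]
  exact Nat.card_congr
    ((Equiv.sigmaEquivProd X _).symm.trans ((Equiv.sigmaCongrRight moveToFiber).trans swapPairs))

theorem isGassmannEquivalent_stabilizer [Finite X] [IsPretransitive G X] [IsPretransitive G Y]
    (h : ∀ g : G, Nat.card (fixedBy X g) = Nat.card (fixedBy Y g)) (x : X) (y : Y) :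
    IsGassmannEquivalent (stabilizer G x) (stabilizer G y) := by
  intro g
  have card_eq : Nat.card X = Nat.card Y := by simpa using h 1
  have card_ne_zero : Nat.card X ≠ 0 := Nat.card_ne_zero.2 ⟨⟨x⟩, inferInstance⟩
  have : Finite Y := Nat.finite_of_card_ne_zero (card_eq ▸ card_ne_zero)
  have card_pairs : Nat.card (Σ k : conjugatesOf g, fixedBy X k.1) =
      Nat.card (Σ k : conjugatesOf g, fixedBy Y k.1) :=
    Nat.card_congr (Equiv.sigmaCongrRight fun k => (Finite.card_eq.1 (h k)).some)
  refine Nat.eq_of_mul_eq_mul_left (Nat.pos_of_ne_zero card_ne_zero) ?_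
  rw [card_mul_card_stabilizer_inter_conjugatesOf, card_pairs, card_eq,
    card_mul_card_stabilizer_inter_conjugatesOf]

end Gassmann

section ProjectivePlane

/-- Incidence of the point `x` and the line `y` in the projective plane of order 3. -/
def Incident (x y : Fin 13) : Prop :=
  x + y ∈ ({0, 1, 3, 9} : Finset (Fin 13))

instance (x y : Fin 13) : Decidable (Incident x y) :=
  inferInstanceAs (Decidable (x + y ∈ ({0, 1, 3, 9} : Finset (Fin 13))))

theorem card_incident (x : Fin 13) : #{y | Incident x y} = 4 := by
  decide +revert +kernel

theorem card_incident_and_incident {x x' : Fin 13} (h : x ≠ x') :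
    #{y | Incident x y ∧ Incident x' y} = 1 := by
  decide +revert +kernel

theorem incident_apply_iff {p : Perm (Fin 13) × Perm (Fin 13)} (hp : p ∈ G₀) (x y : Fin 13) :
    Incident (p.1 x) (p.2 y) ↔ Incident x y := by
  induction hp using Subgroup.closure_induction generalizing x y with
  | mem p hp =>
    obtain rfl | rfl | rfl := hp <;> decide +revert +kernel
  | one => rfl
  | mul p q _ _ ihp ihq => exact (ihp _ _).trans (ihq x y)
  | inv p _ ih => simpa using (ih (p.1⁻¹ x) (p.2⁻¹ y)).symm

theorem card_fixedPoints_fst_eq_snd {p : Perm (Fin 13) × Perm (Fin 13)} (hp : p ∈ G₀) :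
    Nat.card (fixedPoints p.1) = Nat.card (fixedPoints p.2) := by
  have isUnit : IsUnit (incidenceMatrix Incident) :=
    isUnit_incidenceMatrix (fun _ _ => card_incident_and_incident) fun x => by simp [card_incident]
  exact card_fixedPoints_eq_of_isUnit isUnit fun x y => by
    simp [incidenceMatrix, incident_apply_iff hp]

end ProjectivePlane

section Actions

/-- The 13 points, on which `G₀` acts through its first coordinate. This is a synonym of `Fin 13`,
distinct from `Line`, so that both actions can be instances. -/
def Point : Type := Fin 13

/-- The 13 lines, on which `G₀` acts through its second coordinate. -/
def Line : Type := Fin 13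

instance : Zero Point := inferInstanceAs (Zero (Fin 13))

instance : Zero Line := inferInstanceAs (Zero (Fin 13))

instance : Finite Point := inferInstanceAs (Finite (Fin 13))

instance : Finite Line := inferInstanceAs (Finite (Fin 13))

instance : MulAction G₀ Point :=
  MulAction.compHom (Fin 13) ((MonoidHom.fst _ _).comp G₀.subtype)

instance : MulAction G₀ Line :=
  MulAction.compHom (Fin 13) ((MonoidHom.snd _ _).comp G₀.subtype)

theorem A_eq_stabilizer : A = stabilizer G₀ (0 : Point) := rfl

theorem B_eq_stabilizer : B = stabilizer G₀ (0 : Line) := rfl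

/-- The generator `(d, d')` of `G₀`. -/
def genD : G₀ := ⟨(d, d'), Subgroup.subset_closure (by simp)⟩

/-- The generator `(e, e')` of `G₀`. -/
def genE : G₀ := ⟨(e, e'), Subgroup.subset_closure (by simp)⟩

/-- The generator `(f, f')` of `G₀`. -/
def genF : G₀ := ⟨(f, f'), Subgroup.subset_closure (by simp)⟩

-- `genD * genE * genF` acts as a 13-cycle both on the points and on the lines.
instance : IsPretransitive G₀ Point := by
  have orbit_zero : ∀ x : Fin 13, ∃ n : Fin 13, ((d * e * f) ^ n.val) 0 = x := by decide +kernel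
  refine (isPretransitive_iff_base (0 : Point)).2 fun x => ?_
  obtain ⟨n, hn⟩ := orbit_zero x
  exact ⟨(genD * genE * genF) ^ n.val, hn⟩

instance : IsPretransitive G₀ Line := by
  have orbit_zero : ∀ y : Fin 13, ∃ n : Fin 13, ((d' * e' * f') ^ n.val) 0 = y := by
    decide +kernel
  refine (isPretransitive_iff_base (0 : Line)).2 fun y => ?_
  obtain ⟨n, hn⟩ := orbit_zero y
  exact ⟨(genD * genE * genF) ^ n.val, hn⟩

theorem index_stabilizer_point (x : Point) : (stabilizer G₀ x).index = 13 :=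
  (index_stabilizer_of_transitive G₀ x).trans (Nat.card_fin 13)

theorem index_stabilizer_line (y : Line) : (stabilizer G₀ y).index = 13 :=
  (index_stabilizer_of_transitive G₀ y).trans (Nat.card_fin 13)

theorem not_stabilizer_zero_line_le_stabilizer_point (x : Point) :
    ¬ stabilizer G₀ (0 : Line) ≤ stabilizer G₀ x := by
  intro h
  have fixed_dfd : (d * f * d) x = x :=
    h (x := genD * genF * genD) (show (d' * f' * d') 0 = 0 by decide +kernel)
  have fixed_ede : (e * d * e) x = x :=
    h (x := genE * genD * genE) (show (e' * d' * e') 0 = 0 by decide +kernel)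
  have fixed_fef : (f * e * f) x = x :=
    h (x := genF * genE * genF) (show (f' * e' * f') 0 = 0 by decide +kernel)
  have no_common_fixed_point : ∀ x : Fin 13,
      ¬ ((d * f * d) x = x ∧ (e * d * e) x = x ∧ (f * e * f) x = x) := by decide +kernel
  exact no_common_fixed_point x ⟨fixed_dfd, fixed_ede, fixed_fef⟩

end Actions

/-- Every element of `G₀` has equally many fixed points in its two coordinates; the point
stabilizers `A` and `B` are Gassmann equivalent of index 13, but not conjugate. -/
theorem fixed_gassmann_not_conjugate :
    (∀ p ∈ G₀, Nat.card {x : Fin 13 // p.1 x = x} = Nat.card {x : Fin 13 // p.2 x = x}) ∧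
    (∀ g : G₀,
      Nat.card ((A : Set G₀) ∩ {x : G₀ | IsConj g x} : Set G₀) =
      Nat.card ((B : Set G₀) ∩ {x : G₀ | IsConj g x} : Set G₀)) ∧
    A.index = 13 ∧ B.index = 13 ∧
    ¬ ∃ x : G₀, Subgroup.map (MulAut.conj x).toMonoidHom A = B := by
  rw [A_eq_stabilizer, B_eq_stabilizer]
  refine ⟨fun p hp => card_fixedPoints_fst_eq_snd hp, ?_, index_stabilizer_point 0,
    index_stabilizer_line 0, ?_⟩
  · exact isGassmannEquivalent_stabilizer
      (fun g : G₀ => card_fixedPoints_fst_eq_snd g.2) (0 : Point) (0 : Line)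
  · rintro ⟨g, conj_eq⟩
    have stabilizer_eq : stabilizer G₀ (g • (0 : Point)) = stabilizer G₀ (0 : Line) :=
      (stabilizer_smul_eq_stabilizer_map_conj g 0).trans conj_eq
    exact not_stabilizer_zero_line_le_stabilizer_point _ stabilizer_eq.ge
end

section
/- Let d, e, f be the permutations of {0,…,12} given in cycle notation by d = (0 12)(1 10)(3 5)(6 7), e = (0 10)(3 4)(9 2)(5 8), f = (0 4)(9 12)(1 6)(2 11), and d' = (0 4)(2 3)(6 8)(9 10), e' = (0 12)(6 9)(5 11)(1 4), f' = (0 10)(5 1)(2 7)(3 12). Then the subgroup of Sym(13) × Sym(13) generated by (d,d'), (e,e'), (f,f') has order 5616, and both coordinate actions on {0,…,12} are transitive. -/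
open Equiv

open Matrix
open scoped MatrixGroups LinearAlgebra.Projectivization commutatorElement

/-!
`G₀` is `SL(3, 𝔽₃)` in disguise. The 13 points and the 13 lines of the projective plane over `𝔽₃`
can be labelled so that `(d, d')`, `(e, e')`, `(f, f')` are the actions on points and on lines of
three matrices, where a matrix acts on the coordinates of lines through its inverse transpose. These
three matrices generate `SL(3, 𝔽₃)`, because short words in them give a transvection and a cyclic
permutation matrix. The action on points is faithful since `𝔽₃` has no nontrivial cube root of
unity, so `|G₀| = |SL(3, 𝔽₃)|`, and special linear groups act transitively on projective spaces.
-/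

section SpecialLinear

open Matrix.SpecialLinearGroup

variable {ι R K : Type*} [Fintype ι] [DecidableEq ι] [CommRing R] [Field K]

theorem commutatorElement_transvection {i j k : ι} (hij : i ≠ j) (hjk : j ≠ k) (hik : i ≠ k)
    (a b : R) :
    ⁅SpecialLinearGroup.transvection hij a, SpecialLinearGroup.transvection hjk b⁆ =
      SpecialLinearGroup.transvection hik (a * b) := by
  rw [commutatorElement_def, mul_inv_eq_iff_eq_mul, mul_inv_eq_iff_eq_mul]
  apply Subtype.ext
  simp only [coe_mul, transvection_coe, mul_add, add_mul, mul_one, one_mul, zero_mul,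
    single_mul_single_same, single_mul_single_of_ne _ _ _ _ hjk.symm,
    single_mul_single_of_ne _ _ _ _ hik.symm]
  abel

theorem transvection_one_pow {i j : ι} (hij : i ≠ j) (n : ℕ) :
    SpecialLinearGroup.transvection hij (1 : R) ^ n =
      SpecialLinearGroup.transvection hij (n : R) := by
  induction n with
  | zero => simp
  | succ n ih => rw [pow_succ, ih, Nat.cast_succ, transvection_add]

theorem diag2n_eq_prod_transvection {i j : ι} (hij : i ≠ j) {c : K} (hc : c ≠ 0) :
    diag2n hij c hc =
      SpecialLinearGroup.transvection hij c * SpecialLinearGroup.transvection hij.symm (-c⁻¹) *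
        SpecialLinearGroup.transvection hij c * SpecialLinearGroup.transvection hij (-1) *
        SpecialLinearGroup.transvection hij.symm 1 * SpecialLinearGroup.transvection hij (-1) := by
  ext k l
  simp only [diag2n_coe, coe_mul, transvection_coe, mul_add, add_mul, mul_one, one_mul, mul_neg,
    neg_mul, neg_neg, add_zero, mul_inv_cancel₀ hc, inv_mul_cancel₀ hc, single_mul_single_same,
    single_mul_single_of_ne _ _ _ _ hij.symm, single_mul_single_of_ne _ _ _ _ hij,
    Matrix.add_apply, single_apply, diagonal_apply, one_apply]
  grind

theorem subgroup_eq_top_of_transvection_mem [Nontrivial ι]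
    {H : Subgroup (SpecialLinearGroup ι K)}
    (hH : ∀ (i j : ι) (hij : i ≠ j) (c : K), SpecialLinearGroup.transvection hij c ∈ H) :
    H = ⊤ := by
  refine (Subgroup.eq_top_iff' H).2 fun A => ?_
  refine diagonal_transvection_induction' (· ∈ H) A (fun i j hij c hc => ?_) hH
    fun _ _ => H.mul_mem
  rw [diag2n_eq_prod_transvection]
  exact H.mul_mem (H.mul_mem (H.mul_mem (H.mul_mem (H.mul_mem (hH ..) (hH ..)) (hH ..)) (hH ..))
    (hH ..)) (hH ..)

/-- The permutation matrix of the cycle `e₀ ↦ e₁ ↦ e₂ ↦ e₀` of the standard basis. -/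
def cyclicShift (R : Type*) [CommRing R] : SL(3, R) :=
  ⟨!![0, 0, 1; 1, 0, 0; 0, 1, 0], by simp [det_fin_three]⟩

theorem cyclicShift_mul_transvection_mul_inv {i j : Fin 3} (hij : i ≠ j) (c : R) :
    cyclicShift R * SpecialLinearGroup.transvection hij c * (cyclicShift R)⁻¹ =
      SpecialLinearGroup.transvection (add_left_injective 1 |>.ne hij) c := by
  rw [mul_inv_eq_iff_eq_mul]
  apply Subtype.ext
  suffices (cyclicShift R).1 * single i j c = single (i + 1) (j + 1) c * (cyclicShift R).1 by
    simp only [coe_mul, transvection_coe, mul_add, add_mul, mul_one, one_mul, this]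
  ext k l
  fin_cases i <;> fin_cases j <;> fin_cases k <;> fin_cases l <;>
    simp [cyclicShift, mul_apply, single_apply]

theorem subgroup_eq_top_of_cyclicShift_mem {p : ℕ} [Fact p.Prime] {H : Subgroup SL(3, ZMod p)}
    (hshift : cyclicShift (ZMod p) ∈ H)
    (htransvection : SpecialLinearGroup.transvection (zero_ne_one (α := Fin 3)) 1 ∈ H) : H = ⊤ := by
  have conj_mem {i j : Fin 3} (hij : i ≠ j) {c : ZMod p}
      (h : SpecialLinearGroup.transvection hij c ∈ H) :
      SpecialLinearGroup.transvection (add_left_injective 1 |>.ne hij) c ∈ H :=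
    cyclicShift_mul_transvection_mul_inv hij c ▸ H.mul_mem (H.mul_mem hshift h) (H.inv_mem hshift)
  have succ_one_mem : ∀ (i : Fin 3) (hi : i ≠ i + 1),
      SpecialLinearGroup.transvection hi (1 : ZMod p) ∈ H
    | 0, _ => htransvection
    | 1, _ => conj_mem _ htransvection
    | 2, _ => conj_mem _ (conj_mem _ htransvection)
  have succ_mem (i : Fin 3) (hi : i ≠ i + 1) (c : ZMod p) :
      SpecialLinearGroup.transvection hi c ∈ H := by
    rw [← ZMod.natCast_zmod_val c, ← transvection_one_pow]
    exact H.pow_mem (succ_one_mem i hi) _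
  refine subgroup_eq_top_of_transvection_mem fun i j hij c => ?_
  obtain rfl | rfl : j = i + 1 ∨ j = i + 1 + 1 := by grind
  · exact succ_mem i hij c
  · have hi : i ≠ i + 1 := by simp
    have hi' : i + 1 ≠ i + 1 + 1 := by simp
    rw [← one_mul c, ← commutatorElement_transvection hi hi' hij, commutatorElement_def]
    exact H.mul_mem (H.mul_mem (H.mul_mem (succ_mem ..) (succ_mem ..)) (H.inv_mem (succ_mem ..)))
      (H.inv_mem (succ_mem ..))

theorem center_specialLinearGroup_fin_prime (p : ℕ) [Fact p.Prime] :
    Subgroup.center (SpecialLinearGroup (Fin p) (ZMod p)) = ⊥ := by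
  refine (Subgroup.eq_bot_iff_forall _).2 fun A hA => ?_
  obtain ⟨r, hr, hrA⟩ := mem_center_iff.1 hA
  obtain rfl : r = 1 := by rwa [Fintype.card_fin, ZMod.pow_card] at hr
  exact Subtype.ext (by simp [← hrA])

theorem faithfulSMul_projectivization_fin_prime (p : ℕ) [Fact p.Prime] :
    FaithfulSMul SL(p, ZMod p) (ℙ (ZMod p) (Fin p → ZMod p)) := by
  have hker := Projectivization.SL_mulAction_ker (ι := Fin p) (K := ZMod p)
  rw [center_specialLinearGroup_fin_prime, MonoidHom.ker_eq_bot_iff] at hker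
  exact ⟨fun h => hker (Equiv.ext h)⟩

theorem card_specialLinearGroup_mul (n : ℕ) [NeZero n] [Fintype K] :
    Nat.card SL(n, K) * (Fintype.card K - 1) =
      ∏ i : Fin n, (Fintype.card K ^ n - Fintype.card K ^ (i : ℕ)) := by
  let det : GL (Fin n) K →* Kˣ := GeneralLinearGroup.det
  have card_ker : Nat.card det.ker = Nat.card SL(n, K) := by
    rw [← Nat.card_range_of_injective (toGL_injective (n := Fin n) (R := K)), range_toGL]
    rfl
  have index_ker : det.ker.index = Fintype.card K - 1 := by
    rw [Subgroup.index_ker, MonoidHom.range_eq_top.2 GeneralLinearGroup.det_surjective,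
      Subgroup.card_top, Nat.card_units, Nat.card_eq_fintype_card]
  rw [← card_ker, ← index_ker, Subgroup.card_mul_index, card_GL_field]

theorem specialLinearGroup_transpose_inv (A : SpecialLinearGroup ι R) : A⁻¹ᵀ = Aᵀ⁻¹ :=
  Subtype.ext (by simp [coe_transpose, coe_inv, adjugate_transpose])

/-- The contragredient automorphism `A ↦ (A⁻¹)ᵀ`, through which a matrix acts on the coordinates of
linear forms, that is, of hyperplanes. -/
def contragredient (ι R : Type*) [Fintype ι] [DecidableEq ι] [CommRing R] :
    SpecialLinearGroup ι R ≃* SpecialLinearGroup ι R where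
  toFun A := A⁻¹ᵀ
  invFun A := A⁻¹ᵀ
  left_inv A := Subtype.ext (by simp [specialLinearGroup_transpose_inv])
  right_inv A := Subtype.ext (by simp [specialLinearGroup_transpose_inv])
  map_mul' A B := Subtype.ext (by simp [transpose_mul])

end SpecialLinear

section Transversal

variable {ι K V : Type*} [DivisionRing K] [AddCommGroup V] [Module K V]

/-- A family of vectors is a transversal of the projective space `ℙ K V` if it contains exactly one
nonzero vector of each line through the origin, so that its index type labels the points of `ℙ K V`.
-/
structure IsProjectiveTransversal (K : Type*) [DivisionRing K] [Module K V] (v : ι → V) : Prop where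
  ne_zero (i : ι) : v i ≠ 0
  eq_of_smul_eq (i j : ι) (a : K) : a • v j = v i → i = j
  exists_smul_eq (w : V) : w ≠ 0 → ∃ (i : ι) (a : K), a • w = v i

namespace IsProjectiveTransversal

variable {v : ι → V} (hv : IsProjectiveTransversal K v)

theorem bijective_mk : Function.Bijective fun i => Projectivization.mk K (v i) (hv.ne_zero i) := by
  refine ⟨fun i j hij => ?_, fun x => ?_⟩
  · obtain ⟨a, ha⟩ := (Projectivization.mk_eq_mk_iff' ..).1 hij
    exact hv.eq_of_smul_eq i j a ha
  · induction x with
    | h w hw =>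
      obtain ⟨i, hi⟩ := hv.exists_smul_eq w hw
      exact ⟨i, (Projectivization.mk_eq_mk_iff' ..).2 hi⟩

/-- The labelling of the points of the projective space by the indices of a transversal. -/
noncomputable def equivProjectivization : ι ≃ ℙ K V :=
  Equiv.ofBijective _ hv.bijective_mk

variable (G : Type*) [Group G] [DistribMulAction G V] [SMulCommClass G K V]

/-- The permutation action on labels of a group acting linearly on `V`. -/
noncomputable def permHom : G →* Perm ι :=
  hv.equivProjectivization.symm.permCongrHom.toMonoidHom.comp (MulAction.toPermHom G (ℙ K V))

variable {G}

theorem permHom_apply_eq_iff_smul_eq {g : G} {i j : ι} :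
    hv.permHom G g i = j ↔ g • hv.equivProjectivization i = hv.equivProjectivization j :=
  hv.equivProjectivization.symm_apply_eq

theorem permHom_eq_iff {g : G} {σ : Perm ι} :
    hv.permHom G g = σ ↔ ∀ i, ∃ a : K, a • v (σ i) = g • v i := by
  simp_rw [Equiv.ext_iff, hv.permHom_apply_eq_iff_smul_eq]
  exact forall_congr' fun i => Projectivization.mk_eq_mk_iff' ..

theorem permHom_injective [FaithfulSMul G (ℙ K V)] : Function.Injective (hv.permHom G) :=
  hv.equivProjectivization.symm.permCongrHom.injective.comp MulAction.toPerm_injective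

theorem exists_permHom_apply_eq [MulAction.IsPretransitive G (ℙ K V)] (i j : ι) :
    ∃ g : G, hv.permHom G g i = j := by
  simp_rw [hv.permHom_apply_eq_iff_smul_eq]
  exact MulAction.exists_smul_eq ..

end IsProjectiveTransversal

end Transversal

section ProjectivePlane

/-- Homogeneous coordinates of the 13 points of the plane over `𝔽₃`. The points `2`, `9`, `11`, `1`
serve as the projective frame, and the incidence structure preserved by `G₀` dictates the rest. -/
def pointCoordinates : Fin 13 → Fin 3 → ZMod 3 :=
  ![![1, -1, 1], ![1, 1, 1], ![1, 0, 0], ![1, 0, 1], ![0, 1, 1], ![1, 0, -1], ![1, -1, 0],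
    ![1, 1, 0], ![0, 1, -1], ![0, 1, 0], ![1, -1, -1], ![0, 0, 1], ![1, 1, -1]]

/-- Homogeneous coordinates of the 13 lines of the plane over `𝔽₃`: a line consists of the points
whose coordinate vector is orthogonal to that of the line. -/
def lineCoordinates : Fin 13 → Fin 3 → ZMod 3 :=
  ![![1, 0, -1], ![0, 1, 1], ![1, -1, 0], ![1, 1, 0], ![1, 0, 1], ![1, 0, 0], ![1, -1, -1],
    ![0, 0, 1], ![1, 1, 1], ![1, -1, 1], ![1, 1, -1], ![0, 1, 0], ![0, 1, -1]]

theorem isProjectiveTransversal_pointCoordinates :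
    IsProjectiveTransversal (ZMod 3) pointCoordinates :=
  ⟨by decide, by decide +kernel, by decide +kernel⟩

theorem isProjectiveTransversal_lineCoordinates :
    IsProjectiveTransversal (ZMod 3) lineCoordinates :=
  ⟨by decide, by decide +kernel, by decide +kernel⟩

/-- The matrix inducing `d` on points and `d'` on lines. -/
def matrixD : SL(3, ZMod 3) :=
  ⟨!![1, 0, 0; 0, -1, 0; 0, 0, -1], by decide⟩

/-- The matrix inducing `e` on points and `e'` on lines. -/
def matrixE : SL(3, ZMod 3) :=
  ⟨!![0, -1, 0; -1, 0, 0; 0, 0, -1], by decide⟩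

/-- The matrix inducing `f` on points and `f'` on lines. -/
def matrixF : SL(3, ZMod 3) :=
  ⟨!![0, -1, -1; 0, -1, 0; -1, 1, 0], by decide⟩

theorem closure_matrixD_matrixE_matrixF :
    Subgroup.closure {matrixD, matrixE, matrixF} = ⊤ := by
  set H := Subgroup.closure {matrixD, matrixE, matrixF}
  have hD : matrixD ∈ H := Subgroup.subset_closure (by simp)
  have hE : matrixE ∈ H := Subgroup.subset_closure (by simp)
  have hF : matrixF ∈ H := Subgroup.subset_closure (by simp)
  -- The involution `diag(-1, 1, -1)`; the words below were found by searching the Cayley graph.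
  have hEDE : matrixE * matrixD * matrixE ∈ H := H.mul_mem (H.mul_mem hE hD) hE
  have shift_eq : matrixF * (matrixE * matrixD * matrixE) * matrixF *
      (matrixE * matrixD * matrixE) * matrixF * matrixE = cyclicShift (ZMod 3) := by
    decide +kernel
  have transvection_eq : matrixD * matrixF * (matrixD * (matrixE * matrixD * matrixE)) * matrixF =
      SpecialLinearGroup.transvection (zero_ne_one (α := Fin 3)) 1 := by
    decide +kernel
  refine subgroup_eq_top_of_cyclicShift_mem ?_ ?_
  · rw [← shift_eq]
    exact H.mul_mem (H.mul_mem (H.mul_mem (H.mul_mem (H.mul_mem hF hEDE) hF) hEDE) hF) hE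
  · rw [← transvection_eq]
    exact H.mul_mem (H.mul_mem (H.mul_mem hD hF) (H.mul_mem hD hEDE)) hF

/-- The action of `SL(3, 𝔽₃)` on the labels of points and of lines. -/
noncomputable def pointLineHom : SL(3, ZMod 3) →* Perm (Fin 13) × Perm (Fin 13) :=
  (isProjectiveTransversal_pointCoordinates.permHom SL(3, ZMod 3)).prod
    ((isProjectiveTransversal_lineCoordinates.permHom SL(3, ZMod 3)).comp
      (contragredient (Fin 3) (ZMod 3)).toMonoidHom)

theorem pointLineHom_eq_iff {A : SL(3, ZMod 3)} {σ τ : Perm (Fin 13)} :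
    pointLineHom A = (σ, τ) ↔
      (∀ x, ∃ a : ZMod 3, a • pointCoordinates (σ x) = A • pointCoordinates x) ∧
      ∀ l, ∃ a : ZMod 3, a • lineCoordinates (τ l) =
        contragredient (Fin 3) (ZMod 3) A • lineCoordinates l := by
  rw [pointLineHom, MonoidHom.prod_apply, Prod.mk_inj, MonoidHom.comp_apply,
    IsProjectiveTransversal.permHom_eq_iff, IsProjectiveTransversal.permHom_eq_iff]
  rfl

theorem pointLineHom_matrixD : pointLineHom matrixD = (d, d') :=
  pointLineHom_eq_iff.2 (by decide +kernel)

theorem pointLineHom_matrixE : pointLineHom matrixE = (e, e') :=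
  pointLineHom_eq_iff.2 (by decide +kernel)

theorem pointLineHom_matrixF : pointLineHom matrixF = (f, f') :=
  pointLineHom_eq_iff.2 (by decide +kernel)

theorem range_pointLineHom : pointLineHom.range = G₀ := by
  rw [MonoidHom.range_eq_map, ← closure_matrixD_matrixE_matrixF, MonoidHom.map_closure, G₀]
  simp only [Set.image_insert_eq, Set.image_singleton, pointLineHom_matrixD, pointLineHom_matrixE,
    pointLineHom_matrixF]

theorem pointLineHom_injective : Function.Injective pointLineHom := fun _ _ h =>
  have := faithfulSMul_projectivization_fin_prime 3
  isProjectiveTransversal_pointCoordinates.permHom_injective (congrArg Prod.fst h)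

theorem exists_pointLineHom_fst_apply_eq (x y : Fin 13) : ∃ A, (pointLineHom A).1 x = y :=
  isProjectiveTransversal_pointCoordinates.exists_permHom_apply_eq x y

theorem exists_pointLineHom_snd_apply_eq (x y : Fin 13) : ∃ A, (pointLineHom A).2 x = y := by
  obtain ⟨B, hB⟩ := isProjectiveTransversal_lineCoordinates.exists_permHom_apply_eq
    (G := SL(3, ZMod 3)) x y
  obtain ⟨A, rfl⟩ := (contragredient (Fin 3) (ZMod 3)).surjective B
  exact ⟨A, hB⟩

theorem card_SL_three_zmod_three : Nat.card SL(3, ZMod 3) = 5616 := by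
  have h := card_specialLinearGroup_mul (K := ZMod 3) 3
  rw [ZMod.card, Fin.prod_univ_three] at h
  exact Nat.eq_of_mul_eq_mul_right two_pos (h.trans (by decide))

end ProjectivePlane

/-- `G₀` has order 5616 (the order of L₃(3)) and both coordinate actions on `Fin 13`
are transitive. -/
theorem order_and_transitive :
    Nat.card G₀ = 5616 ∧
    (∀ x y : Fin 13, ∃ p ∈ G₀, p.1 x = y) ∧
    (∀ x y : Fin 13, ∃ p ∈ G₀, p.2 x = y) := by
  rw [← range_pointLineHom]
  refine ⟨?_, fun x y => ?_, fun x y => ?_⟩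
  · rw [← card_SL_three_zmod_three]
    exact Nat.card_range_of_injective pointLineHom_injective
  · obtain ⟨A, hA⟩ := exists_pointLineHom_fst_apply_eq x y
    exact ⟨pointLineHom A, ⟨A, rfl⟩, hA⟩
  · obtain ⟨A, hA⟩ := exists_pointLineHom_snd_apply_eq x y
    exact ⟨pointLineHom A, ⟨A, rfl⟩, hA⟩
end
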